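/- arXiv:2411.06541 — 7 statements merged into one kernel-verified Lean document; each statement's English description precedes it below -/
import Mathlib

section
/- Fix integers q ≥ 3 and d ≥ 2, a real β ≥ 1, and a symmetric interaction matrix A ∈ ℝ_{≥0}^{q×q} satisfying: (a) A ≥ 1_q 1_q^T entrywise with strict inequality in at least one entry; (b) |𝓜(d,A)| ≥ 2 and there exist c ∈ [q] and a₁, a₂ ∈ 𝓜(d,A) with A_{c,a₁} ≠ A_{c,a₂}. Let B = B(β,A). Let ζ be any probability distribution on 𝓜(d,A) and define the mixture μ^{(ζ)} := Σ_{a∈𝓜(d,A)} ζ(a) · δ_a^{⊗d}, a probability distribution on ([q] ∪ {c*})^d. Then F_{B,d}(μ^{(ζ)}) = Σ_{a∈𝓜(d,A)} ζ(a) · F_{B,d}(δ_a^{⊗d}). -/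
open scoped BigOperators Classical
open MeasureTheory

/-- A probability distribution on a finite type, represented as a nonnegative
function summing to one. -/
def IsProbDist {ι : Type*} [Fintype ι] (μ : ι → ℝ) : Prop :=
  (∀ x, 0 ≤ μ x) ∧ ∑ x, μ x = 1

/-- The unnormalized belief propagation functional `G_c(μ) = E_{τ∼μ}[∏ i, A c (τ i)]`. -/
noncomputable def Gfun {q d : ℕ} (A : Matrix (Fin q) (Fin q) ℝ)
    (μ : (Fin d → Fin q) → ℝ) (c : Fin q) : ℝ :=
  ∑ σ : Fin d → Fin q, μ σ * ∏ i, A c (σ i)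

/-- The belief propagation functional `F_{A,d,c}(μ) = G_c(μ) / ∑ b, G_b(μ)`. -/
noncomputable def Ffun {q d : ℕ} (A : Matrix (Fin q) (Fin q) ℝ)
    (μ : (Fin d → Fin q) → ℝ) (c : Fin q) : ℝ :=
  Gfun A μ c / ∑ b, Gfun A μ b

/-- The product measure on `[k]^d` with marginals `ν i`. -/
noncomputable def prodMeasure {d k : ℕ} (ν : Fin d → Fin k → ℝ) :
    (Fin d → Fin k) → ℝ :=
  fun σ => ∏ i, ν i (σ i)

/-- The point mass `δ_b` at a spin `b`. -/
noncomputable def pointMass {k : ℕ} (b : Fin k) : Fin k → ℝ :=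
  fun c => if c = b then 1 else 0

/-- The marginal of a distribution `μ` on `[k]^d` at coordinate `i`. -/
noncomputable def marg {d k : ℕ} (μ : (Fin d → Fin k) → ℝ) (i : Fin d) : Fin k → ℝ :=
  fun b => ∑ σ : Fin d → Fin k, if σ i = b then μ σ else 0

/-- The tilt `λ ⋆ μ` of a distribution `μ` on `[k]^d` by an external field `λ`. -/
noncomputable def tilt {d k : ℕ} (lam : Fin d → Fin k → ℝ)
    (μ : (Fin d → Fin k) → ℝ) : (Fin d → Fin k) → ℝ :=
  fun σ => (μ σ * ∏ i, lam i (σ i)) / ∑ σ' : Fin d → Fin k, μ σ' * ∏ i, lam i (σ' i)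

/-- The `(q+1) × (q+1)` interaction matrix `B(β,A) = [[β, 1ᵀ],[1, A]]`; the index `0`
plays the role of the special spin `c*`. -/
noncomputable def Bmat {q : ℕ} (β : ℝ) (A : Matrix (Fin q) (Fin q) ℝ) :
    Matrix (Fin (q+1)) (Fin (q+1)) ℝ :=
  Matrix.of fun i j =>
    if hi : i = 0 then (if j = 0 then β else 1)
    else if hj : j = 0 then 1 else A (i.pred hi) (j.pred hj)

/-- `𝓜(d,A) = argmax_{b} ∑ c, A c b ^ d`. -/
def Mset {q : ℕ} (d : ℕ) (A : Matrix (Fin q) (Fin q) ℝ) : Set (Fin q) :=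
  {b | ∀ b', ∑ c, A c b' ^ d ≤ ∑ c, A c b ^ d}

/-- `max_{b ∈ [q]} ∑ c, A c b ^ d` (as a supremum over the finite nonempty type `Fin q`). -/
noncomputable def maxCol {q : ℕ} (d : ℕ) (A : Matrix (Fin q) (Fin q) ℝ) : ℝ :=
  ⨆ b, ∑ c, A c b ^ d

/-!
Call `∑ b, Gfun A μ b` the normalizer of `μ`. Since `Gfun` is linear in `μ`, `Ffun` sends a mixture
to the average of the component values in which every weight is multiplied by the normalizer of its
component. For `Bmat β A` the normalizer of `δ_a^{⊗d}` is one plus the `a`-th column sum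
`∑ c, A c a ^ d`, which takes the same value `1 + maxCol d A` for all `a ∈ Mset d A`; this common
factor cancels.
-/

section Mixtures

variable {ι : Type*} [Fintype ι] {q d : ℕ} (A : Matrix (Fin q) (Fin q) ℝ) (ζ : ι → ℝ)
  (ν : ι → (Fin d → Fin q) → ℝ)

theorem Gfun_mixture (c : Fin q) :
    Gfun A (fun σ => ∑ a, ζ a * ν a σ) c = ∑ a, ζ a * Gfun A (ν a) c := by
  simp only [Gfun, Finset.sum_mul, Finset.mul_sum, mul_assoc]
  exact Finset.sum_comm

theorem sum_Gfun_mixture :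
    ∑ b, Gfun A (fun σ => ∑ a, ζ a * ν a σ) b = ∑ a, ζ a * ∑ b, Gfun A (ν a) b := by
  simp only [Gfun_mixture, Finset.mul_sum]
  exact Finset.sum_comm

theorem sum_Gfun_mul_Ffun {μ : (Fin d → Fin q) → ℝ} (hμ : ∑ b, Gfun A μ b ≠ 0) (c : Fin q) :
    (∑ b, Gfun A μ b) * Ffun A μ c = Gfun A μ c :=
  mul_div_cancel₀ _ hμ

variable {ζ ν}

theorem Ffun_mixture (hν : ∀ a, ζ a ≠ 0 → ∑ b, Gfun A (ν a) b ≠ 0) (c : Fin q) :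
    Ffun A (fun σ => ∑ a, ζ a * ν a σ) c =
      (∑ a, ζ a * ((∑ b, Gfun A (ν a) b) * Ffun A (ν a) c)) /
        ∑ a, ζ a * ∑ b, Gfun A (ν a) b := by
  rw [Ffun, Gfun_mixture, sum_Gfun_mixture]
  congr 1
  refine Finset.sum_congr rfl fun a _ => ?_
  rcases eq_or_ne (ζ a) 0 with hζa | hζa
  · simp [hζa]
  · rw [sum_Gfun_mul_Ffun A (hν a hζa)]

theorem Ffun_mixture_of_sum_Gfun_eq {Z : ℝ} (hZ : Z ≠ 0) (hζ : ∑ a, ζ a = 1)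
    (hν : ∀ a, ζ a ≠ 0 → ∑ b, Gfun A (ν a) b = Z) (c : Fin q) :
    Ffun A (fun σ => ∑ a, ζ a * ν a σ) c = ∑ a, ζ a * Ffun A (ν a) c := by
  have weighted_normalizer (a : ι) : ζ a * ∑ b, Gfun A (ν a) b = ζ a * Z := by
    rcases eq_or_ne (ζ a) 0 with hζa | hζa
    · simp [hζa]
    · rw [hν a hζa]
  calc Ffun A (fun σ => ∑ a, ζ a * ν a σ) c
      = (∑ a, ζ a * Z * Ffun A (ν a) c) / ∑ a, ζ a * Z := by
        simp only [Ffun_mixture A fun a hζa => (hν a hζa).trans_ne hZ, ← mul_assoc,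
          weighted_normalizer]
    _ = (∑ a, ζ a * Ffun A (ν a) c) * Z / Z := by
        simp only [mul_right_comm _ Z, ← Finset.sum_mul, hζ, one_mul]
    _ = ∑ a, ζ a * Ffun A (ν a) c := mul_div_cancel_right₀ _ hZ

end Mixtures

theorem Gfun_prodMeasure {q d : ℕ} (A : Matrix (Fin q) (Fin q) ℝ) (ν : Fin d → Fin q → ℝ)
    (c : Fin q) : Gfun A (prodMeasure ν) c = ∏ i, ∑ b, ν i b * A c b := by
  simp only [Gfun, prodMeasure, ← Finset.prod_mul_distrib, Fintype.prod_sum]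

theorem Gfun_prodMeasure_pointMass {q : ℕ} (d : ℕ) (A : Matrix (Fin q) (Fin q) ℝ) (a c : Fin q) :
    Gfun A (prodMeasure fun _ : Fin d => pointMass a) c = A c a ^ d := by
  simp [Gfun_prodMeasure, pointMass]

theorem sum_Gfun_Bmat_pointMass_succ {q : ℕ} (d : ℕ) (β : ℝ) (A : Matrix (Fin q) (Fin q) ℝ)
    (a : Fin q) :
    ∑ b, Gfun (Bmat β A) (prodMeasure fun _ : Fin d => pointMass a.succ) b =
      1 + ∑ c, A c a ^ d := by
  simp [Gfun_prodMeasure_pointMass, Fin.sum_univ_succ, Bmat]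

theorem sum_pow_eq_maxCol_of_mem_Mset {q d : ℕ} {A : Matrix (Fin q) (Fin q) ℝ} {a : Fin q}
    (ha : a ∈ Mset d A) : ∑ c, A c a ^ d = maxCol d A :=
  have isGreatest : IsGreatest (Set.range fun b => ∑ c, A c b ^ d) (∑ c, A c a ^ d) :=
    ⟨Set.mem_range_self a, Set.forall_mem_range.2 ha⟩
  isGreatest.csSup_eq.symm

theorem maxCol_nonneg {q : ℕ} (d : ℕ) {A : Matrix (Fin q) (Fin q) ℝ} (hA : ∀ c b, 0 ≤ A c b) :
    0 ≤ maxCol d A :=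
  Real.iSup_nonneg fun b => Finset.sum_nonneg fun c _ => pow_nonneg (hA c b) d

theorem stmt3_general {q d : ℕ} (β : ℝ) {A : Matrix (Fin q) (Fin q) ℝ} (hA : ∀ c b, 0 ≤ A c b)
    {ζ : Fin q → ℝ} (hζ : ∑ a, ζ a = 1) (hζsupp : ∀ a, a ∉ Mset d A → ζ a = 0)
    (c : Fin (q + 1)) :
    Ffun (Bmat β A)
        (fun σ => ∑ a, ζ a * prodMeasure (fun _ : Fin d => pointMass a.succ) σ) c =
      ∑ a, ζ a * Ffun (Bmat β A) (prodMeasure (fun _ : Fin d => pointMass a.succ)) c := by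
  have normalizer_pos : 0 < 1 + maxCol d A := add_pos_of_pos_of_nonneg one_pos (maxCol_nonneg d hA)
  refine Ffun_mixture_of_sum_Gfun_eq (Bmat β A) normalizer_pos.ne' hζ (fun a hζa => ?_) c
  have ha : a ∈ Mset d A := not_imp_comm.1 (hζsupp a) hζa
  rw [sum_Gfun_Bmat_pointMass_succ, sum_pow_eq_maxCol_of_mem_Mset ha]

/-- Lemma: `F_B` is affine on mixtures of point masses from `𝓜(d,A)`.
Under the standing assumptions on `q, d, β, A`, if `ζ` is a probability
distribution supported on `𝓜(d,A)` and
`μ^{(ζ)} = ∑_{a} ζ(a) · δ_{a}^{⊗d}` (where the spin `a ∈ [q]` is embedded in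
`[q] ∪ {c*}` as `a.succ`), then
`F_B(μ^{(ζ)}) = ∑_a ζ(a) · F_B(δ_a^{⊗d})` coordinatewise. -/
theorem stmt3 (q d : ℕ) (hq : 3 ≤ q) (hd : 2 ≤ d) (β : ℝ) (hβ : 1 ≤ β)
    (A : Matrix (Fin q) (Fin q) ℝ) (hsymm : A.IsSymm)
    (hge : ∀ c b, (1:ℝ) ≤ A c b) (hstrict : ∃ c b, (1:ℝ) < A c b)
    (hMcard : 2 ≤ (Mset d A).ncard)
    (hMne : ∃ c, ∃ a₁ ∈ Mset d A, ∃ a₂ ∈ Mset d A, A c a₁ ≠ A c a₂)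
    (ζ : Fin q → ℝ) (hζ0 : ∀ a, 0 ≤ ζ a) (hζ1 : ∑ a, ζ a = 1)
    (hζsupp : ∀ a, a ∉ Mset d A → ζ a = 0) :
    ∀ c : Fin (q+1),
      Ffun (Bmat β A)
        (fun σ => ∑ a, ζ a * prodMeasure (fun _ : Fin d => pointMass a.succ) σ) c =
      ∑ a, ζ a * Ffun (Bmat β A) (prodMeasure (fun _ : Fin d => pointMass a.succ)) c :=
  stmt3_general β (fun c b => zero_le_one.trans (hge c b)) hζ1 hζsupp
end

section
/- Fix integers q ≥ 2 and d ≥ 2 and a symmetric interaction matrix A ∈ ℝ_{≥0}^{q×q} such that Σ_{c∈[q]} Π_{i=1}^d A_{c,τ(i)} > 0 for every τ ∈ [q]^d. Then the set 𝓕_{A,d} := { F_{A,d}(μ) : μ an arbitrary probability measure on [q]^d } is a convex polytope, and 𝓕_{A,d} = conv( 𝓕^{prod}_{A,d} ) = conv{ F_{A,d}(δ_τ) : τ ∈ [q]^d }, where 𝓕^{prod}_{A,d} := { F_{A,d}(ν) : ν a product probability measure on [q]^d } and δ_τ is the point mass at the configuration τ. -/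
open scoped BigOperators Classical
open MeasureTheory

/-!
By linearity of `G`, `F(μ)` is the barycenter of the points `F(δ_τ)` with weights proportional to
`Z τ * μ τ`, where `Z τ = ∑ c, ∏ i, A c (τ i)`. As `Z > 0`, reweighting by `Z` and renormalizing is
a bijection of the simplex of distributions on `[q]^d` onto itself, so the barycenters obtained fill
the whole convex hull of the points `F(δ_τ)`. Point masses are product measures, so the values at
product measures lie between the points `F(δ_τ)` and their hull.
-/

section Reweighting

variable {R E ι : Type*} [Field R] [LinearOrder R] [IsStrictOrderedRing R] [AddCommGroup E]
  [Module R E] [Fintype ι]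

theorem convexHull_range_eq_image_centerMass_stdSimplex (p : ι → E) :
    convexHull R (Set.range p) = (fun w => Finset.univ.centerMass w p) '' stdSimplex R ι := by
  have centerMass_eq : Set.EqOn (fun w => Finset.univ.centerMass w p)
      (Fintype.linearCombination R p) (stdSimplex R ι) := fun w hw => by
    simp only [Finset.centerMass_eq_of_sum_1 _ _ hw.2, Fintype.linearCombination_apply]
  rw [centerMass_eq.image_eq, ← convexHull_rangle_single_eq_stdSimplex, LinearMap.image_convexHull,
    ← Set.range_comp]
  congr with i
  simp

theorem sum_mul_pos_of_mem_stdSimplex {Z w : ι → R} (hZ : ∀ i, 0 < Z i)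
    (hw : w ∈ stdSimplex R ι) : 0 < ∑ i, Z i * w i := by
  obtain ⟨i, -, hi⟩ : ∃ i ∈ Finset.univ, 0 < w i :=
    Finset.exists_lt_of_sum_lt (f := 0) (by simp [hw.2])
  exact Finset.sum_pos' (fun j _ => mul_nonneg (hZ j).le (hw.1 j))
    ⟨i, Finset.mem_univ i, mul_pos (hZ i) hi⟩

theorem inv_sum_smul_mem_stdSimplex {w : ι → R} (hw : ∀ i, 0 ≤ w i) (hsum : 0 < ∑ i, w i) :
    (∑ i, w i)⁻¹ • w ∈ stdSimplex R ι := by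
  refine ⟨fun i => mul_nonneg (inv_nonneg.2 hsum.le) (hw i), ?_⟩
  simp only [Pi.smul_apply, smul_eq_mul, ← Finset.mul_sum, inv_mul_cancel₀ hsum.ne']

theorem image_centerMass_mul_stdSimplex {Z : ι → R} (hZ : ∀ i, 0 < Z i) (p : ι → E) :
    (fun w => Finset.univ.centerMass (Z * w) p) '' stdSimplex R ι =
      convexHull R (Set.range p) := by
  apply Set.Subset.antisymm
  · rintro _ ⟨w, hw, rfl⟩
    exact Finset.univ.centerMass_mem_convexHull (fun i _ => mul_nonneg (hZ i).le (hw.1 i))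
      (sum_mul_pos_of_mem_stdSimplex hZ hw) fun i _ => Set.mem_range_self i
  · rw [convexHull_range_eq_image_centerMass_stdSimplex]
    rintro _ ⟨w, hw, rfl⟩
    have hZinv : ∀ i, 0 < Z⁻¹ i := fun i => inv_pos.2 (hZ i)
    have hsum : 0 < ∑ i, (Z⁻¹ * w) i := sum_mul_pos_of_mem_stdSimplex hZinv hw
    refine ⟨(∑ i, (Z⁻¹ * w) i)⁻¹ • (Z⁻¹ * w),
      inv_sum_smul_mem_stdSimplex (fun i => mul_nonneg (hZinv i).le (hw.1 i)) hsum, ?_⟩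
    have hcancel : Z * (Z⁻¹ * w) = w := funext fun i => mul_inv_cancel_left₀ (hZ i).ne' (w i)
    beta_reduce
    rw [mul_smul_comm, hcancel, Finset.centerMass_smul_left _ _ (inv_ne_zero hsum.ne')]

end Reweighting

section BeliefPropagation

variable {q d : ℕ}

theorem IsProbDist.prodMeasure {ν : Fin d → Fin q → ℝ} (hν : ∀ i, IsProbDist (ν i)) :
    IsProbDist (prodMeasure ν) := by
  refine ⟨fun σ => Finset.prod_nonneg fun i _ => (hν i).1 (σ i), ?_⟩
  calc ∑ σ : Fin d → Fin q, ∏ i, ν i (σ i) = ∏ i, ∑ b, ν i b := (Fintype.prod_sum ν).symm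
    _ = 1 := Finset.prod_eq_one fun i _ => (hν i).2

theorem isProbDist_pointMass (b : Fin q) : IsProbDist (pointMass b) := by
  refine ⟨fun c => ?_, by simp [pointMass]⟩
  unfold pointMass
  positivity

/-- The point mass `δ_τ` at a configuration `τ ∈ [q]^d`; `pointMass` is its analogue for spins. -/
noncomputable def configMass (τ : Fin d → Fin q) : (Fin d → Fin q) → ℝ :=
  fun σ => if σ = τ then 1 else 0

theorem prodMeasure_pointMass (τ : Fin d → Fin q) :
    prodMeasure (fun i => pointMass (τ i)) = configMass τ := by
  ext σ
  simp [prodMeasure, pointMass, configMass, Fintype.prod_boole, funext_iff]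

/-- The normalizer `∑ c, G_c(δ_τ)` of the belief propagation functional at a point mass. -/
noncomputable def partitionWeight (A : Matrix (Fin q) (Fin q) ℝ) (τ : Fin d → Fin q) : ℝ :=
  ∑ c, ∏ i, A c (τ i)

theorem sum_Gfun (A : Matrix (Fin q) (Fin q) ℝ) (μ : (Fin d → Fin q) → ℝ) :
    ∑ c, Gfun A μ c = ∑ τ, partitionWeight A τ * μ τ := by
  simp only [Gfun, partitionWeight, Finset.sum_mul, mul_comm (μ _)]
  exact Finset.sum_comm

theorem Ffun_configMass (A : Matrix (Fin q) (Fin q) ℝ) (τ : Fin d → Fin q) (c : Fin q) :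
    Ffun A (configMass τ) c = (∏ i, A c (τ i)) / partitionWeight A τ := by
  simp [Ffun, Gfun, configMass, partitionWeight]

theorem Ffun_eq_centerMass {A : Matrix (Fin q) (Fin q) ℝ}
    (hZ : ∀ τ : Fin d → Fin q, partitionWeight A τ ≠ 0) (μ : (Fin d → Fin q) → ℝ) :
    Ffun A μ =
      Finset.univ.centerMass (partitionWeight A * μ) fun τ => Ffun A (configMass τ) := by
  ext c
  have hG : Gfun A μ c = ∑ τ, partitionWeight A τ * μ τ * Ffun A (configMass τ) c :=
    Finset.sum_congr rfl fun τ _ => by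
      rw [Ffun_configMass]
      field_simp [hZ τ]
  simp only [Ffun, Finset.centerMass, sum_Gfun, hG, Pi.smul_apply, Finset.sum_apply, Pi.mul_apply,
    smul_eq_mul, div_eq_inv_mul]

/-- The set `𝓕_{A,d}` of values of the belief propagation functional at all distributions. -/
def bpRange (d : ℕ) (A : Matrix (Fin q) (Fin q) ℝ) : Set (Fin q → ℝ) :=
  {p | ∃ μ : (Fin d → Fin q) → ℝ, IsProbDist μ ∧ p = Ffun A μ}

/-- The set `𝓕^{prod}_{A,d}` of values of the belief propagation functional at product measures. -/
def bpProdRange (d : ℕ) (A : Matrix (Fin q) (Fin q) ℝ) : Set (Fin q → ℝ) :=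
  {p | ∃ ν : Fin d → Fin q → ℝ, (∀ i, IsProbDist (ν i)) ∧ p = Ffun A (prodMeasure ν)}

/-- The finite set of values `F_{A,d}(δ_τ)` of the belief propagation functional at point masses. -/
def bpConfigRange (d : ℕ) (A : Matrix (Fin q) (Fin q) ℝ) : Set (Fin q → ℝ) :=
  {p | ∃ τ : Fin d → Fin q, p = Ffun A (configMass τ)}

theorem bpConfigRange_subset_bpProdRange (A : Matrix (Fin q) (Fin q) ℝ) :
    bpConfigRange d A ⊆ bpProdRange d A := by
  rintro _ ⟨τ, rfl⟩
  exact ⟨fun i => pointMass (τ i), fun i => isProbDist_pointMass (τ i),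
    by rw [prodMeasure_pointMass]⟩

theorem bpProdRange_subset_bpRange (A : Matrix (Fin q) (Fin q) ℝ) :
    bpProdRange d A ⊆ bpRange d A := by
  rintro _ ⟨ν, hν, rfl⟩
  exact ⟨prodMeasure ν, .prodMeasure hν, rfl⟩

theorem bpRange_eq_convexHull_bpConfigRange {A : Matrix (Fin q) (Fin q) ℝ}
    (hZ : ∀ τ : Fin d → Fin q, 0 < partitionWeight A τ) :
    bpRange d A = convexHull ℝ (bpConfigRange d A) := by
  have bpRange_eq_image : bpRange d A =
      (fun μ => Finset.univ.centerMass (partitionWeight A * μ) fun τ => Ffun A (configMass τ)) ''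
        stdSimplex ℝ (Fin d → Fin q) :=
    -- `IsProbDist μ` unfolds to `μ ∈ stdSimplex ℝ _`.
    Set.ext fun p => exists_congr fun μ => and_congr_right fun _ => by
      rw [Ffun_eq_centerMass (fun τ => (hZ τ).ne') μ, eq_comm]
  have bpConfigRange_eq_range :
      bpConfigRange d A = Set.range fun τ : Fin d → Fin q => Ffun A (configMass τ) :=
    Set.ext fun p => exists_congr fun τ => eq_comm
  rw [bpRange_eq_image, bpConfigRange_eq_range, image_centerMass_mul_stdSimplex hZ]

theorem stmt5_general {A : Matrix (Fin q) (Fin q) ℝ}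
    (hZ : ∀ τ : Fin d → Fin q, 0 < partitionWeight A τ) :
    Convex ℝ (bpRange d A) ∧ bpRange d A = convexHull ℝ (bpProdRange d A) ∧
      bpRange d A = convexHull ℝ (bpConfigRange d A) := by
  have hull := bpRange_eq_convexHull_bpConfigRange hZ
  have hconv : Convex ℝ (bpRange d A) := hull ▸ convex_convexHull ℝ _
  refine ⟨hconv, Set.Subset.antisymm ?_ ?_, hull⟩
  · exact hull.trans_subset (convexHull_mono (bpConfigRange_subset_bpProdRange A))
  · exact convexHull_min (bpProdRange_subset_bpRange A) hconv

end BeliefPropagation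

/-- Lemma: `𝓕_{A,d}` is a convex polytope and is the convex hull of
`𝓕^{prod}_{A,d}`, as well as of the finitely many points `F_{A,d}(δ_τ)`. -/
theorem stmt5 (q d : ℕ) (hq : 2 ≤ q) (hd : 2 ≤ d)
    (A : Matrix (Fin q) (Fin q) ℝ) (hsymm : A.IsSymm) (hnn : ∀ c b, 0 ≤ A c b)
    (hpos : ∀ τ : Fin d → Fin q, 0 < ∑ c, ∏ i, A c (τ i)) :
    Convex ℝ {p : Fin q → ℝ | ∃ μ : (Fin d → Fin q) → ℝ,
        IsProbDist μ ∧ p = Ffun A μ} ∧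
    {p : Fin q → ℝ | ∃ μ : (Fin d → Fin q) → ℝ, IsProbDist μ ∧ p = Ffun A μ} =
      convexHull ℝ {p : Fin q → ℝ | ∃ ν : Fin d → Fin q → ℝ,
        (∀ i, IsProbDist (ν i)) ∧ p = Ffun A (prodMeasure ν)} ∧
    {p : Fin q → ℝ | ∃ μ : (Fin d → Fin q) → ℝ, IsProbDist μ ∧ p = Ffun A μ} =
      convexHull ℝ {p : Fin q → ℝ | ∃ τ : Fin d → Fin q,
        p = Ffun A (fun σ => if σ = τ then 1 else 0)} :=
  stmt5_general hpos
end

section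
/- Fix integers q ≥ 2 and d ≥ 1, a real 0 < β ≤ 1, and a color c* ∈ [q]. Let ξ be any probability distribution on the slice {α ∈ ℤ_{≥0}^q : Σ_{c∈[q]} α(c) = d}. Then (1/(q−1)) · Σ_{c ∈ [q], c ≠ c*} E_{α∼ξ}[ β^{α(c)} ]^{1/d} ≥ β^{1/(q−1)} · E_{α∼ξ}[ β^{ −(1/(q−1)) · α(c*)/d } ]. -/
open scoped BigOperators Classical
open MeasureTheory

/-!
By the power mean inequality the mean of `β ^ (α c / d)` is at most the `d`-th root of the mean of
`β ^ α c`. It then suffices to average over `α` a pointwise inequality, which is AM-GM for the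
numbers `β ^ (α c / d)`, `c ≠ c*`: on the slice, the exponents `α c / d` with `c ≠ c*` sum to
`1 - α c* / d`.
-/

section

variable {Ω ι : Type*} {s : Finset Ω} {t : Finset ι} {β d : ℝ} {ξ : Ω → ℝ} {w : ι → ℝ}

theorem rpow_sum_mul_le_sum_mul_rpow (hβ : 0 < β) (hw : ∀ c ∈ t, 0 ≤ w c)
    (hw_sum : ∑ c ∈ t, w c = 1) (a : ι → ℝ) :
    β ^ (∑ c ∈ t, w c * a c) ≤ ∑ c ∈ t, w c * β ^ a c := by
  calc β ^ (∑ c ∈ t, w c * a c) = ∏ c ∈ t, (β ^ a c) ^ w c := by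
        simp only [Real.rpow_sum_of_pos hβ, ← Real.rpow_mul hβ.le, mul_comm]
    _ ≤ ∑ c ∈ t, w c * β ^ a c :=
        Real.geom_mean_le_arith_mean_weighted t w _ hw hw_sum fun _ _ => Real.rpow_nonneg hβ.le _

theorem sum_mul_rpow_div_le_sum_mul_rpow_rpow (hβ : 0 ≤ β) (hd : 1 ≤ d)
    (hξ : ∀ ω ∈ s, 0 ≤ ξ ω) (hξ_sum : ∑ ω ∈ s, ξ ω = 1) (a : Ω → ℝ) :
    ∑ ω ∈ s, ξ ω * β ^ (a ω / d) ≤ (∑ ω ∈ s, ξ ω * β ^ a ω) ^ (1 / d) := by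
  have rpow_div_rpow (ω : Ω) : (β ^ (a ω / d)) ^ d = β ^ a ω := by
    rw [← Real.rpow_mul hβ, div_mul_cancel₀ _ (by positivity)]
  simpa only [rpow_div_rpow] using Real.arith_mean_le_rpow_mean s ξ (fun ω => β ^ (a ω / d)) hξ
    hξ_sum (fun _ _ => Real.rpow_nonneg hβ _) hd

theorem sum_mul_rpow_sum_mul_div_le (hβ : 0 < β) (hd : 1 ≤ d)
    (hξ : ∀ ω ∈ s, 0 ≤ ξ ω) (hξ_sum : ∑ ω ∈ s, ξ ω = 1)
    (hw : ∀ c ∈ t, 0 ≤ w c) (hw_sum : ∑ c ∈ t, w c = 1) (α : Ω → ι → ℝ) :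
    ∑ ω ∈ s, ξ ω * β ^ (∑ c ∈ t, w c * (α ω c / d)) ≤
      ∑ c ∈ t, w c * (∑ ω ∈ s, ξ ω * β ^ α ω c) ^ (1 / d) := by
  calc ∑ ω ∈ s, ξ ω * β ^ (∑ c ∈ t, w c * (α ω c / d))
      ≤ ∑ ω ∈ s, ξ ω * ∑ c ∈ t, w c * β ^ (α ω c / d) := by
        gcongr with ω hω
        · exact hξ ω hω
        · exact rpow_sum_mul_le_sum_mul_rpow hβ hw hw_sum _
    _ = ∑ c ∈ t, w c * ∑ ω ∈ s, ξ ω * β ^ (α ω c / d) := by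
        simp only [Finset.mul_sum, mul_left_comm]
        exact Finset.sum_comm
    _ ≤ ∑ c ∈ t, w c * (∑ ω ∈ s, ξ ω * β ^ α ω c) ^ (1 / d) := by
        gcongr with c hc
        · exact hw c hc
        · exact sum_mul_rpow_div_le_sum_mul_rpow_rpow hβ.le hd hξ hξ_sum _

variable [Fintype ι] [DecidableEq ι]

theorem rpow_mul_rpow_eq_rpow_sum_erase (hβ : 0 < β) (hd : d ≠ 0) {a : ι → ℝ}
    (ha : ∑ c, a c = d) (i : ι) (r : ℝ) :
    β ^ r * β ^ (-r * a i / d) = β ^ (∑ c ∈ Finset.univ.erase i, r * (a c / d)) := by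
  have sum_erase : ∑ c ∈ Finset.univ.erase i, a c = d - a i := by
    rw [Finset.sum_erase_eq_sub (Finset.mem_univ i), ha]
  rw [← Real.rpow_add hβ, ← Finset.mul_sum, ← Finset.sum_div, sum_erase]
  congr 1
  field_simp
  ring

theorem stmt8_general (hι : 2 ≤ Fintype.card ι) (hd : 1 ≤ d) (hβ : 0 < β) (cstar : ι)
    (hξ : ∀ ω ∈ s, 0 ≤ ξ ω) (hξ_sum : ∑ ω ∈ s, ξ ω = 1) (α : Ω → ι → ℝ)
    (hα : ∀ ω ∈ s, ξ ω ≠ 0 → ∑ c, α ω c = d) :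
    β ^ (1 / ((Fintype.card ι : ℝ) - 1)) *
        ∑ ω ∈ s, ξ ω * β ^ (-(1 / ((Fintype.card ι : ℝ) - 1)) * α ω cstar / d) ≤
      1 / ((Fintype.card ι : ℝ) - 1) *
        ∑ c ∈ Finset.univ.erase cstar, (∑ ω ∈ s, ξ ω * β ^ α ω c) ^ (1 / d) := by
  have hcard : 0 < (Fintype.card ι : ℝ) - 1 := sub_pos.2 (by exact_mod_cast hι)
  set r : ℝ := 1 / ((Fintype.card ι : ℝ) - 1) with hr
  have r_sum : ∑ _c ∈ Finset.univ.erase cstar, r = 1 := by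
    rw [Finset.sum_const, nsmul_eq_mul, Finset.cast_card_erase_of_mem (Finset.mem_univ cstar),
      Finset.card_univ, hr, mul_one_div_cancel hcard.ne']
  calc β ^ r * ∑ ω ∈ s, ξ ω * β ^ (-r * α ω cstar / d)
      = ∑ ω ∈ s, ξ ω * β ^ (∑ c ∈ Finset.univ.erase cstar, r * (α ω c / d)) := by
        rw [Finset.mul_sum]
        refine Finset.sum_congr rfl fun ω hω => ?_
        rcases eq_or_ne (ξ ω) 0 with hξω | hξω
        · simp [hξω]
        · rw [mul_left_comm,
            rpow_mul_rpow_eq_rpow_sum_erase hβ (by positivity) (hα ω hω hξω)]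
    _ ≤ ∑ c ∈ Finset.univ.erase cstar, r * (∑ ω ∈ s, ξ ω * β ^ α ω c) ^ (1 / d) :=
        sum_mul_rpow_sum_mul_div_le hβ hd hξ hξ_sum (fun _ _ => by positivity) r_sum α
    _ = r * ∑ c ∈ Finset.univ.erase cstar, (∑ ω ∈ s, ξ ω * β ^ α ω c) ^ (1 / d) :=
        (Finset.mul_sum ..).symm

end

/-- Jensen-type inequality used in the proof of the convex-bulk
theorem. For `q ≥ 2`, `d ≥ 1`, `0 < β ≤ 1`, a color `c*` and any probability
distribution `ξ` on the slice `{α ∈ ℤ_{≥0}^q : ∑ c, α(c) = d}` (encoded as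
functions `Fin q → Fin (d+1)` with `ξ` vanishing off the slice):
`(1/(q-1)) ∑_{c ≠ c*} E_{α∼ξ}[β^{α(c)}]^{1/d}
  ≥ β^{1/(q-1)} · E_{α∼ξ}[β^{-(1/(q-1))·α(c*)/d}]`. -/
theorem stmt8 (q d : ℕ) (hq : 2 ≤ q) (hd : 1 ≤ d) (β : ℝ)
    (hβ0 : 0 < β) (hβ1 : β ≤ 1) (cstar : Fin q)
    (ξ : (Fin q → Fin (d+1)) → ℝ)
    (hξ0 : ∀ α, 0 ≤ ξ α) (hξ1 : ∑ α, ξ α = 1)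
    (hξs : ∀ α, ξ α ≠ 0 → ∑ c, (α c : ℕ) = d) :
    β ^ ((1:ℝ) / ((q:ℝ) - 1)) *
        (∑ α, ξ α * β ^ (-(1 / ((q:ℝ) - 1)) * ((α cstar : ℕ) : ℝ) / (d:ℝ))) ≤
      (1 / ((q:ℝ) - 1)) *
        ∑ c ∈ Finset.univ.erase cstar,
          (∑ α, ξ α * β ^ ((α c : ℕ))) ^ ((1:ℝ) / (d:ℝ)) := by
  simpa using stmt8_general (by simpa using hq) (Nat.one_le_cast.2 hd) hβ0 cstar
    (fun α _ => hξ0 α) hξ1 (fun α c => (α c : ℝ)) fun α _ hα => by exact_mod_cast hξs α hα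
end

section
/- Let A ∈ ℝ_{>0}^{2×2} be a symmetric entrywise-positive 2-spin interaction matrix with spin set {0,1}, and let d ≥ 1 be an integer. Then there exists a single universal collection of external fields λ^{(1)},…,λ^{(d)} ∈ ℝ_{≥0}^{d×2}, not depending on the input distribution, such that for every probability distribution μ on {0,1}^d one has F_{A,d}(μ) = F_{A,d}( ⊗_{i=1}^d (λ^{(i)} ⋆ μ)_i ). -/
open scoped BigOperators Classical
open MeasureTheory

/-!
Let the `d` copies of the central spin disagree: `mixedWeight A μ s` is the expectation of
`∏ j, A (s j) (τ j)`. Moving one copy at a time from the spin `b` to the spin `a` writes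
`G_a(μ) / G_b(μ)` as a telescoping product of `d` ratios of mixed weights. In the `i`-th ratio only
the `i`-th copy changes, so the other copies act on `μ` as a fixed external field, and the ratio
is that of the expectations of `A a` and `A b` under the `i`-th marginal of the tilted distribution.
Hence the product of these marginals has the same ratio of weights of `a` and `b` as `μ`, and with
two spins this ratio determines the output of belief propagation.
-/

section ProbDist

variable {d k : ℕ} {μ : (Fin d → Fin k) → ℝ}

lemma IsProbDist.sum_mul_pos {ι : Type*} [Fintype ι] {p f : ι → ℝ} (hp : IsProbDist p)
    (hf : ∀ x, 0 < f x) : 0 < ∑ x, p x * f x := by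
  obtain ⟨x, -, hx⟩ : ∃ x ∈ Finset.univ, 0 < p x :=
    Finset.exists_lt_of_sum_lt (by simp [hp.2])
  exact Finset.sum_pos' (fun y _ => mul_nonneg (hp.1 y) (hf y).le)
    ⟨x, Finset.mem_univ x, mul_pos hx (hf x)⟩

lemma isProbDist_tilt {lam : Fin d → Fin k → ℝ} (hlam : ∀ j c, 0 < lam j c)
    (hμ : IsProbDist μ) : IsProbDist (tilt lam μ) := by
  have field_pos (σ : Fin d → Fin k) : 0 < ∏ j, lam j (σ j) :=
    Finset.prod_pos fun j _ => hlam j (σ j)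
  have partition_pos : 0 < ∑ σ, μ σ * ∏ j, lam j (σ j) := hμ.sum_mul_pos field_pos
  refine ⟨fun σ => div_nonneg (mul_nonneg (hμ.1 σ) (field_pos σ).le) partition_pos.le, ?_⟩
  simp only [tilt]
  rw [← Finset.sum_div, div_self partition_pos.ne']

lemma sum_marg_mul (μ : (Fin d → Fin k) → ℝ) (i : Fin d) (f : Fin k → ℝ) :
    ∑ b, marg μ i b * f b = ∑ σ, μ σ * f (σ i) := by
  simp only [marg, Finset.sum_mul]
  rw [Finset.sum_comm]
  simp [ite_mul]

lemma isProbDist_marg (hμ : IsProbDist μ) (i : Fin d) : IsProbDist (marg μ i) := by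
  refine ⟨fun b => Finset.sum_nonneg fun σ _ => ?_, ?_⟩
  · split_ifs
    exacts [hμ.1 σ, le_rfl]
  · simpa [hμ.2] using sum_marg_mul μ i 1

lemma sum_prodMeasure_mul_prod (ν f : Fin d → Fin k → ℝ) :
    ∑ σ, prodMeasure ν σ * ∏ i, f i (σ i) = ∏ i, ∑ b, ν i b * f i b := by
  simp [prodMeasure, Finset.prod_univ_sum, Finset.prod_mul_distrib]

lemma isProbDist_prodMeasure {ν : Fin d → Fin k → ℝ} (hν : ∀ i, IsProbDist (ν i)) :
    IsProbDist (prodMeasure ν) := by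
  refine ⟨fun σ => Finset.prod_nonneg fun i _ => (hν i).1 (σ i), ?_⟩
  simpa [(hν _).2] using sum_prodMeasure_mul_prod ν 1

end ProbDist

section BeliefPropagation

variable {q d : ℕ} {A : Matrix (Fin q) (Fin q) ℝ} {μ ν : (Fin d → Fin q) → ℝ}

lemma Gfun_pos (hA : ∀ c b, 0 < A c b) (hμ : IsProbDist μ) (c : Fin q) : 0 < Gfun A μ c :=
  hμ.sum_mul_pos fun σ => Finset.prod_pos fun i _ => hA c (σ i)

lemma sum_Gfun_pos [NeZero q] (hA : ∀ c b, 0 < A c b) (hμ : IsProbDist μ) :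
    0 < ∑ c, Gfun A μ c :=
  Finset.sum_pos (fun c _ => Gfun_pos hA hμ c) Finset.univ_nonempty

lemma Ffun_eq_of_Gfun_mul_comm (hμ : ∑ c, Gfun A μ c ≠ 0) (hν : ∑ c, Gfun A ν c ≠ 0)
    (h : ∀ a b, Gfun A μ a * Gfun A ν b = Gfun A ν a * Gfun A μ b) (c : Fin q) :
    Ffun A μ c = Ffun A ν c := by
  rw [Ffun, Ffun, div_eq_div_iff hμ hν, Finset.mul_sum, Finset.mul_sum]
  exact Finset.sum_congr rfl fun b _ => h c b

end BeliefPropagation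

section Weitz

variable {q d : ℕ} (A : Matrix (Fin q) (Fin q) ℝ)

/-- The weight `E_{τ∼μ}[∏ j, A (s j) (τ j)]` of a central vertex split into `d` copies, the `j`-th
of which interacts only with the coordinate `j` and has spin `s j`. For constant `s` it is
`Gfun`. -/
noncomputable def mixedWeight (μ : (Fin d → Fin q) → ℝ) (s : Fin d → Fin q) : ℝ :=
  ∑ σ, μ σ * ∏ j, A (s j) (σ j)

/-- The external field exerted by all copies of the split central vertex except the `i`-th, when
they have spins `s`; it is trivial at the coordinate `i`. -/
def cavityField (s : Fin d → Fin q) (i : Fin d) : Fin d → Fin q → ℝ :=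
  Function.update (fun j => A (s j)) i 1

/-- The spins of the split central vertex after its first `k` copies have been moved from `b`
to `a`. -/
def stepSpins (a b : Fin q) (k : ℕ) (j : Fin d) : Fin q :=
  if j.val < k then a else b

/-- The fields of Weitz's reduction: in the `i`-th one, the copies before `i` have spin `a` and
those after `i` have spin `b`. -/
def weitzField (a b : Fin q) (i : Fin d) : Fin d → Fin q → ℝ :=
  cavityField A (stepSpins a b i) i

/-- The product distribution `⊗ᵢ (λ⁽ⁱ⁾ ⋆ μ)ᵢ` for the fields `λ⁽ⁱ⁾ = weitzField A a b i`. -/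
noncomputable def weitzProduct (a b : Fin q) (μ : (Fin d → Fin q) → ℝ) : (Fin d → Fin q) → ℝ :=
  prodMeasure fun i => marg (tilt (weitzField A a b i) μ) i

lemma prod_cavityField_mul (s : Fin d → Fin q) (i : Fin d) (c : Fin q) (σ : Fin d → Fin q) :
    (∏ j, cavityField A s i j (σ j)) * A c (σ i) = ∏ j, A (Function.update s i c j) (σ j) := by
  rw [Fintype.prod_eq_mul_prod_compl i, Fintype.prod_eq_mul_prod_compl i, mul_right_comm]
  congr 1
  · simp [cavityField]
  · refine Finset.prod_congr rfl fun j hj => ?_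
    have hji : j ≠ i := by simpa using hj
    simp [cavityField, hji]

lemma sum_marg_tilt_cavityField_mul (μ : (Fin d → Fin q) → ℝ) (s : Fin d → Fin q) (i : Fin d)
    (c : Fin q) :
    ∑ b, marg (tilt (cavityField A s i) μ) i b * A c b =
      mixedWeight A μ (Function.update s i c) / ∑ σ, μ σ * ∏ j, cavityField A s i j (σ j) := by
  simp only [sum_marg_mul, mixedWeight, tilt, ← prod_cavityField_mul, div_mul_eq_mul_div,
    Finset.sum_div, mul_assoc]

lemma Gfun_weitzProduct (a b c : Fin q) (μ : (Fin d → Fin q) → ℝ) :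
    Gfun A (weitzProduct A a b μ) c =
      (∏ i : Fin d, mixedWeight A μ (Function.update (stepSpins a b i) i c)) /
        ∏ i : Fin d, ∑ σ, μ σ * ∏ j, weitzField A a b i j (σ j) := by
  rw [Gfun, weitzProduct, sum_prodMeasure_mul_prod _ fun _ => A c, ← Finset.prod_div_distrib]
  exact Finset.prod_congr rfl fun i _ => sum_marg_tilt_cavityField_mul A μ _ i c

lemma update_stepSpins_left (a b : Fin q) (i : Fin d) :
    Function.update (stepSpins a b i) i a = stepSpins a b (i + 1) := by
  ext j
  rcases eq_or_ne j i with rfl | hji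
  · simp [stepSpins]
  · have : j.val < i + 1 ↔ j.val < i := by have := Fin.val_ne_of_ne hji; omega
    simp [stepSpins, hji, this]

lemma update_stepSpins_right (a b : Fin q) (i : Fin d) :
    Function.update (stepSpins a b i) i b = stepSpins a b i := by
  simp [stepSpins]

lemma mixedWeight_stepSpins_zero (a b : Fin q) (μ : (Fin d → Fin q) → ℝ) :
    mixedWeight A μ (stepSpins a b 0) = Gfun A μ b := by
  simp [mixedWeight, stepSpins, Gfun]

lemma mixedWeight_stepSpins_self (a b : Fin q) (μ : (Fin d → Fin q) → ℝ) :
    mixedWeight A μ (stepSpins a b d) = Gfun A μ a := by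
  simp [mixedWeight, stepSpins, Gfun]

lemma prod_succ_mul_zero_eq_prod_mul_last {M : Type*} [CommMonoid M] (f : ℕ → M) (n : ℕ) :
    (∏ i : Fin n, f (i + 1)) * f 0 = (∏ i : Fin n, f i) * f n := by
  rw [Fin.prod_univ_eq_prod_range (fun i => f (i + 1)), Fin.prod_univ_eq_prod_range f,
    ← Finset.prod_range_succ, ← Finset.prod_range_succ']

lemma Gfun_weitzProduct_mul_Gfun (a b : Fin q) (μ : (Fin d → Fin q) → ℝ) :
    Gfun A (weitzProduct A a b μ) a * Gfun A μ b =
      Gfun A (weitzProduct A a b μ) b * Gfun A μ a := by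
  simp only [Gfun_weitzProduct, update_stepSpins_left, update_stepSpins_right,
    div_mul_eq_mul_div]
  rw [← mixedWeight_stepSpins_zero A a b, ← mixedWeight_stepSpins_self A a b,
    prod_succ_mul_zero_eq_prod_mul_last fun k => mixedWeight A μ (stepSpins a b k)]

variable {A}

lemma weitzField_pos (hA : ∀ c b, 0 < A c b) (a b : Fin q) (i j : Fin d) (c : Fin q) :
    0 < weitzField A a b i j c := by
  rcases eq_or_ne j i with rfl | hji
  · simp [weitzField, cavityField]
  · simpa [weitzField, cavityField, hji] using hA _ c

lemma isProbDist_weitzProduct (hA : ∀ c b, 0 < A c b) (a b : Fin q) {μ : (Fin d → Fin q) → ℝ}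
    (hμ : IsProbDist μ) : IsProbDist (weitzProduct A a b μ) :=
  isProbDist_prodMeasure fun i => isProbDist_marg (isProbDist_tilt (weitzField_pos hA a b i) hμ) i

lemma Ffun_weitzProduct {A : Matrix (Fin 2) (Fin 2) ℝ} (hA : ∀ c b, 0 < A c b)
    {μ : (Fin d → Fin 2) → ℝ} (hμ : IsProbDist μ) (c : Fin 2) :
    Ffun A (weitzProduct A 0 1 μ) c = Ffun A μ c := by
  have hν : IsProbDist (weitzProduct A 0 1 μ) := isProbDist_weitzProduct hA 0 1 hμ
  have ratio_eq := Gfun_weitzProduct_mul_Gfun A 0 1 μ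
  refine Ffun_eq_of_Gfun_mul_comm (sum_Gfun_pos hA hν).ne' (sum_Gfun_pos hA hμ).ne' ?_ c
  simp only [Fin.forall_fin_two]
  exact ⟨⟨mul_comm _ _, by linarith⟩, by linarith, mul_comm _ _⟩

end Weitz

theorem stmt9_general (d : ℕ) (A : Matrix (Fin 2) (Fin 2) ℝ) (hpos : ∀ c b, 0 < A c b) :
    ∃ lam : Fin d → Fin d → Fin 2 → ℝ,
      (∀ i j c, 0 < lam i j c) ∧
      ∀ μ : (Fin d → Fin 2) → ℝ, IsProbDist μ →
        ∀ c, Ffun A μ c =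
          Ffun A (prodMeasure (fun i => marg (tilt (lam i) μ) i)) c :=
  ⟨weitzField A 0 1, weitzField_pos hpos 0 1, fun _ hμ c => (Ffun_weitzProduct hpos hμ c).symm⟩

/-- Weitz's reduction for 2-spin systems, reinterpreted.
For any symmetric entrywise-positive `2 × 2` interaction matrix `A` and any
`d ≥ 1`, there is a universal collection of nonnegative external fields
`λ⁽¹⁾, …, λ⁽ᵈ⁾ ∈ ℝ_{≥0}^{d×2}` such that for every probability distribution `μ`
on `{0,1}^d`, `F_{A,d}(μ) = F_{A,d}(⊗ᵢ (λ⁽ⁱ⁾ ⋆ μ)ᵢ)`. -/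
theorem stmt9 (d : ℕ) (hd : 1 ≤ d)
    (A : Matrix (Fin 2) (Fin 2) ℝ) (hsymm : A.IsSymm) (hpos : ∀ c b, 0 < A c b) :
    ∃ lam : Fin d → Fin d → Fin 2 → ℝ,
      (∀ i j c, 0 ≤ lam i j c) ∧
      ∀ μ : (Fin d → Fin 2) → ℝ, IsProbDist μ →
        ∀ c, Ffun A μ c =
          Ffun A (prodMeasure (fun i => marg (tilt (lam i) μ) i)) c := by
  obtain ⟨lam, hlam, hF⟩ := stmt9_general d A hpos
  exact ⟨lam, fun i j c => (hlam i j c).le, hF⟩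
end

section
/- Fix an integer q ≥ 2 and a real β ≥ 1. Let A ∈ ℝ_{≥0}^{q×q} be any interaction matrix satisfying A ≥ 1_q 1_q^T entrywise with A ≠ 1_q 1_q^T. Then the symmetric real matrix B = B(β,A) has at least two strictly positive eigenvalues (eigenvalues of a real symmetric matrix counted with multiplicity). -/
open scoped BigOperators Classical
open MeasureTheory

/-!
By Sylvester's law of inertia, the number of positive eigenvalues of a real symmetric matrix is the
largest dimension of a space mapping linearly into `ℝⁿ` with positive definite pulled-back form.
Restricted to the plane of vectors `(x, s • y)`, the form of `B(β, A)` is the binary form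
`β x² + 2 (∑ y) x s + (yᵀ A y) s²`, which is positive definite as soon as `0 < β` and
`(∑ y)² < β (yᵀ A y)`. For `y = 1` this reads `q² < β ∑ A`, which the entrywise bound provides.
-/

open Matrix QuadraticMap

theorem finrank_le_sigPos_of_posDef_comp {R V W : Type*} [CommRing R] [LinearOrder R]
    [StrongRankCondition R] [AddCommGroup V] [Module R V] [Module.Finite R V]
    [AddCommGroup W] [Module R W] {Q : QuadraticForm R V} {f : W →ₗ[R] V}
    (hf : (Q.comp f).PosDef) : Module.finrank R W ≤ sigPos Q := by
  have injective_f : Function.Injective f := by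
    rw [injective_iff_map_eq_zero]
    intro w hw
    exact hf.anisotropic w (by rw [QuadraticMap.comp_apply, hw, map_zero])
  have posDef_range : (Q.restrict (LinearMap.range f)).PosDef := by
    rintro ⟨_, w, rfl⟩ hw
    exact hf w fun h => hw (by ext; simp [h])
  rw [← LinearMap.finrank_range_of_inj injective_f]
  exact le_sigPos_of_posDef Q posDef_range

theorem binary_quadratic_pos {R : Type*} [CommRing R] [LinearOrder R] [IsStrictOrderedRing R]
    {a b c : R} (ha : 0 < a) (hdisc : b ^ 2 < a * c) {p : R × R} (hp : p ≠ 0) :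
    0 < a * p.1 ^ 2 + 2 * b * p.1 * p.2 + c * p.2 ^ 2 := by
  obtain ⟨x, y⟩ := p
  have complete_square : a * (a * x ^ 2 + 2 * b * x * y + c * y ^ 2) =
      (a * x + b * y) ^ 2 + (a * c - b ^ 2) * y ^ 2 := by ring
  refine pos_of_mul_pos_right (a := a) ?_ ha.le
  rw [complete_square]
  obtain rfl | hy := eq_or_ne y 0
  · have hx : x ≠ 0 := by simpa using hp
    simp only [mul_zero, add_zero]
    positivity
  · have := sub_pos.mpr hdisc
    positivity

theorem sq_card_lt_sum_sum {R n : Type*} [Semiring R] [PartialOrder R] [IsStrictOrderedRing R]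
    [Fintype n] {M : Matrix n n R} (hge : ∀ i j, 1 ≤ M i j) (hne : ∃ i j, M i j ≠ 1) :
    (Fintype.card n : R) ^ 2 < ∑ i, ∑ j, M i j := by
  obtain ⟨c, b, hcb⟩ := hne
  have row_le (i : n) : (Fintype.card n : R) ≤ ∑ j, M i j := by
    simpa using Finset.sum_le_sum (s := .univ) fun j _ => hge i j
  have row_lt : (Fintype.card n : R) < ∑ j, M c j := by
    simpa using Finset.sum_lt_sum (s := .univ) (fun j _ => hge c j)
      ⟨b, Finset.mem_univ b, (hge c b).lt_of_ne' hcb⟩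
  calc (Fintype.card n : R) ^ 2
    _ = ∑ _i : n, (Fintype.card n : R) := by simp [pow_two]
    _ < ∑ i, ∑ j, M i j :=
      Finset.sum_lt_sum (fun i _ => row_le i) ⟨c, Finset.mem_univ c, row_lt⟩

section Inertia

variable {n : Type*} [Fintype n] [DecidableEq n]

theorem toQuadraticForm'_apply {R : Type*} [CommRing R] (M : Matrix n n R) (x : n → R) :
    M.toQuadraticForm' x = x ⬝ᵥ M *ᵥ x :=
  toLinearMap₂'_apply' M x x

variable {M : Matrix n n ℝ} (hM : M.IsHermitian)

theorem weightedSumSquares_eigenvalues_star_eigenvectorUnitary_mulVec (x : n → ℝ) :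
    weightedSumSquares ℝ hM.eigenvalues (star (hM.eigenvectorUnitary : Matrix n n ℝ) *ᵥ x) =
      M.toQuadraticForm' x := by
  set U : Matrix n n ℝ := ↑hM.eigenvectorUnitary
  have star_mulVec_eq : star U *ᵥ x = x ᵥ* U := by
    rw [star_eq_conjTranspose, conjTranspose_eq_transpose_of_trivial, mulVec_transpose]
  have spectral : M = U * diagonal hM.eigenvalues * star U := hM.spectral_theorem
  calc weightedSumSquares ℝ hM.eigenvalues (star U *ᵥ x)
    _ = (star U *ᵥ x) ⬝ᵥ diagonal hM.eigenvalues *ᵥ (star U *ᵥ x) := by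
      simp only [weightedSumSquares_apply, dotProduct, mulVec_diagonal, smul_eq_mul,
        mul_left_comm]
    _ = x ⬝ᵥ (U * diagonal hM.eigenvalues * star U) *ᵥ x := by
      rw [← mulVec_mulVec, ← mulVec_mulVec, dotProduct_mulVec x, star_mulVec_eq]
    _ = M.toQuadraticForm' x := by rw [← spectral, toQuadraticForm'_apply]

theorem equivalent_weightedSumSquares_eigenvalues :
    Equivalent M.toQuadraticForm' (weightedSumSquares ℝ hM.eigenvalues) :=
  ⟨{ UnitaryGroup.toLinearEquiv (star hM.eigenvectorUnitary) with
     map_app' := weightedSumSquares_eigenvalues_star_eigenvectorUnitary_mulVec hM }⟩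

theorem card_pos_eigenvalues_eq_sigPos :
    (Finset.univ.filter fun i => 0 < hM.eigenvalues i).card = sigPos M.toQuadraticForm' := by
  rw [QuadraticForm.sigPos_of_equiv_weightedSumSquares
    (equivalent_weightedSumSquares_eigenvalues hM), ← Set.ncard_coe_finset, Finset.coe_filter_univ]

end Inertia

section Bmat

variable {q : ℕ} {β : ℝ} {A : Matrix (Fin q) (Fin q) ℝ}

theorem Bmat_mulVec_vecCons (x : ℝ) (y : Fin q → ℝ) :
    Bmat β A *ᵥ vecCons x y = vecCons (β * x + ∑ i, y i) (Function.const _ x + A *ᵥ y) := by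
  ext i
  cases i using Fin.cases <;> simp [Bmat, mulVec, dotProduct, Fin.sum_univ_succ]

theorem toQuadraticForm'_Bmat_vecCons_smul (x s : ℝ) (y : Fin q → ℝ) :
    (Bmat β A).toQuadraticForm' (vecCons x (s • y)) =
      β * x ^ 2 + 2 * (∑ i, y i) * x * s + (y ⬝ᵥ A *ᵥ y) * s ^ 2 := by
  have dotProduct_const : y ⬝ᵥ Function.const _ x = (∑ i, y i) * x := by
    simp only [dotProduct, Function.const_apply, Finset.sum_mul]
  simp only [toQuadraticForm'_apply, Bmat_mulVec_vecCons, cons_dotProduct_cons, dotProduct_add,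
    mulVec_smul, smul_dotProduct, dotProduct_smul, Pi.smul_apply, smul_eq_mul, ← Finset.mul_sum,
    dotProduct_const]
  ring

theorem posDef_toQuadraticForm'_Bmat_comp_vecCons (hβ : 0 < β) {y : Fin q → ℝ}
    (hy : (∑ i, y i) ^ 2 < β * (y ⬝ᵥ A *ᵥ y)) :
    ((Bmat β A).toQuadraticForm'.comp
      ((LinearMap.fst ℝ ℝ ℝ).vecCons ((LinearMap.snd ℝ ℝ ℝ).smulRight y))).PosDef := by
  intro p hp
  simpa [toQuadraticForm'_Bmat_vecCons_smul] using binary_quadratic_pos hβ hy hp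

theorem sq_sum_one_lt_mul_one_dotProduct_mulVec_one (hβ : 1 ≤ β) (hge : ∀ c b, 1 ≤ A c b)
    (hne : ∃ c b, A c b ≠ 1) :
    (∑ i, (1 : Fin q → ℝ) i) ^ 2 < β * (1 ⬝ᵥ A *ᵥ 1) := by
  have sq_lt : (q : ℝ) ^ 2 < ∑ i, ∑ j, A i j := by simpa using sq_card_lt_sum_sum hge hne
  calc (∑ i, (1 : Fin q → ℝ) i) ^ 2
    _ = (q : ℝ) ^ 2 := by simp
    _ < ∑ i, ∑ j, A i j := sq_lt
    _ ≤ β * ∑ i, ∑ j, A i j := le_mul_of_one_le_left ((sq_nonneg _).trans sq_lt.le) hβ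
    _ = β * (1 ⬝ᵥ A *ᵥ 1) := by simp [dotProduct, mulVec]

theorem stmt11_general (hβ : 0 < β) {y : Fin q → ℝ} (hy : (∑ i, y i) ^ 2 < β * (y ⬝ᵥ A *ᵥ y))
    (hB : (Bmat β A).IsHermitian) :
    2 ≤ (Finset.univ.filter (fun i => 0 < hB.eigenvalues i)).card := by
  rw [card_pos_eigenvalues_eq_sigPos]
  simpa using finrank_le_sigPos_of_posDef_comp (posDef_toQuadraticForm'_Bmat_comp_vecCons hβ hy)

end Bmat

/-- Lemma: `B(β,A)` has at least two positive eigenvalues.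
For `q ≥ 2`, `β ≥ 1` and `A ∈ ℝ_{≥0}^{q×q}` with `A ≥ 1 1ᵀ` entrywise and
`A ≠ 1 1ᵀ`, the symmetric matrix `B = B(β,A)` has at least two strictly positive
eigenvalues (counted with multiplicity). -/
theorem stmt11 (q : ℕ) (hq : 2 ≤ q) (β : ℝ) (hβ : 1 ≤ β)
    (A : Matrix (Fin q) (Fin q) ℝ)
    (hge : ∀ c b, (1:ℝ) ≤ A c b) (hne : ∃ c b, A c b ≠ 1)
    (hB : (Bmat β A).IsHermitian) :
    2 ≤ (Finset.univ.filter (fun i => 0 < hB.eigenvalues i)).card :=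
  stmt11_general (zero_lt_one.trans_le hβ)
    (sq_sum_one_lt_mul_one_dotProduct_mulVec_one hβ hge hne) hB
end

section
/- For every integer q ≥ 2 and every real 0 < β < 1, one has ((q−1)/log(1/β)) · log( (q−1) / ((q−1) − (1−β)) ) ≥ √β. -/
/-!
Put `m = q - 1`. The bound `1 - x⁻¹ ≤ log x` at `x = m / (m - (1 - β))` gives
`1 - β ≤ m * log (m / (m - (1 - β)))`, which eliminates `q`. What remains,
`√β ≤ (1 - β) / log (1 / β)`, says that the geometric mean of `β` and `1` is at most their
logarithmic mean; in terms of `t = log (1 / β) / 2` it is the inequality `t ≤ sinh t`.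
-/

open Real

theorem le_mul_log_div_sub {m u : ℝ} (hm : 0 < m) (hu : u < m) : u ≤ m * log (m / (m - u)) := by
  have hmu : 0 < m - u := sub_pos.mpr hu
  calc
    u = m * (1 - (m / (m - u))⁻¹) := by field_simp; ring
    _ ≤ m * log (m / (m - u)) :=
      mul_le_mul_of_nonneg_left (one_sub_inv_le_log_of_pos (div_pos hm hmu)) hm.le

theorem log_le_sqrt_sub_inv_sqrt {x : ℝ} (hx : 1 ≤ x) : log x ≤ √x - (√x)⁻¹ := by
  have hsqrt : 1 ≤ √x := one_le_sqrt.mpr hx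
  calc
    log x = 2 * log √x := by rw [log_sqrt (zero_le_one.trans hx)]; ring
    _ ≤ 2 * sinh (log √x) :=
      mul_le_mul_of_nonneg_left (self_le_sinh_iff.mpr (log_nonneg hsqrt)) zero_le_two
    _ = √x - (√x)⁻¹ := by rw [sinh_log (zero_lt_one.trans_le hsqrt)]; ring

theorem sqrt_mul_mul_log_div_le_sub {a b : ℝ} (ha : 0 < a) (hab : a ≤ b) :
    √(a * b) * log (b / a) ≤ b - a := by
  have hb : 0 < b := ha.trans_le hab
  calc
    √(a * b) * log (b / a) ≤ √(a * b) * (√(b / a) - (√(b / a))⁻¹) :=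
      mul_le_mul_of_nonneg_left (log_le_sqrt_sub_inv_sqrt ((one_le_div ha).mpr hab)) (sqrt_nonneg _)
    _ = √b ^ 2 - √a ^ 2 := by rw [sqrt_mul ha.le, sqrt_div hb.le]; field_simp
    _ = b - a := by rw [sq_sqrt hb.le, sq_sqrt ha.le]

theorem stmt13_general {q β : ℝ} (hβ0 : 0 < β) (hβ1 : β < 1) (hq : 1 - β < q - 1) :
    √β ≤ (q - 1) / log (1 / β) * log ((q - 1) / ((q - 1) - (1 - β))) := by
  have hlog : 0 < log (1 / β) := log_pos ((one_lt_div hβ0).mpr hβ1)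
  rw [div_mul_eq_mul_div, le_div_iff₀ hlog]
  calc
    √β * log (1 / β) = √(β * 1) * log (1 / β) := by rw [mul_one]
    _ ≤ 1 - β := sqrt_mul_mul_log_div_le_sub hβ0 hβ1.le
    _ ≤ (q - 1) * log ((q - 1) / ((q - 1) - (1 - β))) :=
      le_mul_log_div_sub ((sub_pos.mpr hβ1).trans hq) hq

/-- Numerical claim. For every integer `q ≥ 2` and every real
`0 < β < 1`, `((q-1)/log(1/β)) · log((q-1)/((q-1)-(1-β))) ≥ √β`. -/
theorem stmt13 (q : ℕ) (hq : 2 ≤ q) (β : ℝ) (hβ0 : 0 < β) (hβ1 : β < 1) :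
    Real.sqrt β ≤
      ((q:ℝ) - 1) / Real.log (1 / β) *
        Real.log (((q:ℝ) - 1) / (((q:ℝ) - 1) - (1 - β))) := by
  have hq' : (2 : ℝ) ≤ q := by exact_mod_cast hq
  exact stmt13_general hβ0 hβ1 (by linarith)
end

section
/- Fix integers q ≥ 2 and d ≥ 2q and a real 0 < ε ≤ 1/4. Define, for 0 < β < 1, Ξ_{d,q,ε}(β) := ((q−1)/log(1/β)) · log( (ε β^{−d/(10q)} + (1−ε))^{1/d} / (ε β^{1/(10q(q−1))} + (1−ε)) ). Then Ξ_{d,q,ε} is a decreasing (antitone) function of β on the interval [1 − q/(d+1), 1), and moreover Ξ_{d,q,ε}(1 − q/(d+1)) ≤ ε. -/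
/-- The function `Ξ_{d,q,ε}(β)` from the numerical claim:
`Ξ_{d,q,ε}(β) = ((q-1)/log(1/β)) · log((ε β^{-d/(10q)} + (1-ε))^{1/d} / (ε β^{1/(10q(q-1))} + (1-ε)))`. -/
noncomputable def Xi (d q : ℕ) (ε : ℝ) (β : ℝ) : ℝ :=
  ((q:ℝ) - 1) / Real.log (1 / β) *
    Real.log ((ε * β ^ (-(d:ℝ) / (10 * (q:ℝ))) + (1 - ε)) ^ ((1:ℝ) / (d:ℝ)) /
      (ε * β ^ ((1:ℝ) / (10 * (q:ℝ) * ((q:ℝ) - 1))) + (1 - ε)))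

/-!
Let `K` be the cumulant generating function of a Bernoulli(`ε`) variable. With `t = log (1 / β)`,
`a = d / (10 q)` and `b = 1 / (10 q (q - 1))`, one has `Ξ(β) = (q - 1) F(t) / t`, where
`F(t) = K(a t) / d - K(-b t)` vanishes at `0`. So `Ξ` decreases in `β` as soon as `F` is convex.
Now `F''(t) = a² K''(a t) / d - b² K''(-b t)`, and `K''(x) ≤ e^(y - x) K''(y)` for `x ≤ y`, so it
is enough that `e^((a + b) t) ≤ a² / (d b²) = d (q - 1)²`; Bernoulli's inequality gives
`β ^ (d / q) ≥ 1 / (d + 1)` for `β ≥ 1 - q / (d + 1)`, which is more than sufficient.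
The bound on `Ξ` combines `K(s) ≤ ε (e^s - 1)` with Jensen's inequality `ε s ≤ K(s)`.
-/

open Real Set

lemma hasDerivAt_comp_const_mul {f : ℝ → ℝ} {f' k t : ℝ} (hf : HasDerivAt f f' (k * t)) :
    HasDerivAt (fun t => f (k * t)) (k * f') t :=
  (hf.comp t (hasDerivAt_const_mul k)).congr_deriv (mul_comm f' k)

lemma monotoneOn_div_self_of_convexOn {f : ℝ → ℝ} {s : Set ℝ} (hf : ConvexOn ℝ s f)
    (hs : 0 ∈ s) (hf0 : f 0 = 0) : MonotoneOn (fun t => f t / t) (s \ {0}) := by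
  intro x hx y hy hxy
  simpa [hf0] using hf.secant_mono hs hx.1 hy.1 hx.2 hy.2 hxy

section BernoulliCgf

/-- The moment generating function of a Bernoulli variable with success probability `ε`. -/
noncomputable def bernoulliMgf (ε s : ℝ) : ℝ := ε * exp s + (1 - ε)

/-- The cumulant generating function of a Bernoulli variable with success probability `ε`. -/
noncomputable def bernoulliCgf (ε s : ℝ) : ℝ := log (bernoulliMgf ε s)

/-- The mean of the Bernoulli(`ε`) law exponentially tilted by `s`: the first derivative of
`bernoulliCgf ε`. -/
noncomputable def bernoulliTiltedMean (ε s : ℝ) : ℝ := ε * exp s / bernoulliMgf ε s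

/-- The variance of the Bernoulli(`ε`) law exponentially tilted by `s`: the second derivative of
`bernoulliCgf ε`. -/
noncomputable def bernoulliTiltedVar (ε s : ℝ) : ℝ := ε * (1 - ε) * (exp s / bernoulliMgf ε s ^ 2)

variable {ε : ℝ}

lemma bernoulliMgf_pos (hε0 : 0 ≤ ε) (hε1 : ε ≤ 1) (s : ℝ) : 0 < bernoulliMgf ε s := by
  unfold bernoulliMgf
  rcases hε1.lt_or_eq with hlt | rfl
  · have := sub_pos.2 hlt
    positivity
  · simp [exp_pos]

lemma bernoulliMgf_le_exp_mul (hε1 : ε ≤ 1) {x y : ℝ} (hxy : x ≤ y) :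
    bernoulliMgf ε y ≤ exp (y - x) * bernoulliMgf ε x := by
  have hexp : 1 ≤ exp (y - x) := one_le_exp (sub_nonneg.2 hxy)
  calc ε * exp y + (1 - ε) ≤ ε * exp y + exp (y - x) * (1 - ε) := by
        gcongr
        exact le_mul_of_one_le_left (sub_nonneg.2 hε1) hexp
    _ = ε * exp (y - x + x) + exp (y - x) * (1 - ε) := by rw [sub_add_cancel]
    _ = exp (y - x) * (ε * exp x + (1 - ε)) := by rw [exp_add]; ring

lemma bernoulliTiltedVar_nonneg (hε0 : 0 ≤ ε) (hε1 : ε ≤ 1) (s : ℝ) :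
    0 ≤ bernoulliTiltedVar ε s := by
  have := sub_nonneg.2 hε1
  unfold bernoulliTiltedVar
  positivity

lemma bernoulliTiltedVar_le_exp_mul (hε0 : 0 ≤ ε) (hε1 : ε ≤ 1) {x y : ℝ} (hxy : x ≤ y) :
    bernoulliTiltedVar ε x ≤ exp (y - x) * bernoulliTiltedVar ε y := by
  have hx := bernoulliMgf_pos hε0 hε1 x
  have hy := bernoulliMgf_pos hε0 hε1 y
  have hsq : bernoulliMgf ε y ^ 2 ≤ (exp (y - x) * bernoulliMgf ε x) ^ 2 := by
    gcongr
    exact bernoulliMgf_le_exp_mul hε1 hxy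
  have hquot : exp x / bernoulliMgf ε x ^ 2 ≤ exp (y - x) * (exp y / bernoulliMgf ε y ^ 2) := by
    rw [← mul_div_assoc, div_le_div_iff₀ (by positivity) (by positivity)]
    calc exp x * bernoulliMgf ε y ^ 2
        ≤ exp x * (exp (y - x) * bernoulliMgf ε x) ^ 2 := by gcongr
      _ = exp (y - x) * exp (y - x + x) * bernoulliMgf ε x ^ 2 := by rw [exp_add]; ring
      _ = exp (y - x) * exp y * bernoulliMgf ε x ^ 2 := by rw [sub_add_cancel]
  calc ε * (1 - ε) * (exp x / bernoulliMgf ε x ^ 2)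
      ≤ ε * (1 - ε) * (exp (y - x) * (exp y / bernoulliMgf ε y ^ 2)) :=
        mul_le_mul_of_nonneg_left hquot (mul_nonneg hε0 (sub_nonneg.2 hε1))
    _ = exp (y - x) * (ε * (1 - ε) * (exp y / bernoulliMgf ε y ^ 2)) := by ring

lemma hasDerivAt_bernoulliMgf (ε s : ℝ) : HasDerivAt (bernoulliMgf ε) (ε * exp s) s :=
  ((hasDerivAt_exp s).const_mul ε).add_const (1 - ε)

lemma hasDerivAt_bernoulliCgf (hε0 : 0 ≤ ε) (hε1 : ε ≤ 1) (s : ℝ) :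
    HasDerivAt (bernoulliCgf ε) (bernoulliTiltedMean ε s) s :=
  (hasDerivAt_bernoulliMgf ε s).log (bernoulliMgf_pos hε0 hε1 s).ne'

lemma hasDerivAt_bernoulliTiltedMean (hε0 : 0 ≤ ε) (hε1 : ε ≤ 1) (s : ℝ) :
    HasDerivAt (bernoulliTiltedMean ε) (bernoulliTiltedVar ε s) s := by
  have hquot := ((hasDerivAt_exp s).const_mul ε).div (hasDerivAt_bernoulliMgf ε s)
    (bernoulliMgf_pos hε0 hε1 s).ne'
  refine hquot.congr_deriv ?_
  unfold bernoulliTiltedVar bernoulliMgf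
  ring

@[simp]
lemma bernoulliCgf_zero (ε : ℝ) : bernoulliCgf ε 0 = 0 := by
  simp [bernoulliCgf, bernoulliMgf]

lemma bernoulliCgf_le (hε0 : 0 ≤ ε) (hε1 : ε ≤ 1) (s : ℝ) :
    bernoulliCgf ε s ≤ ε * (exp s - 1) :=
  calc bernoulliCgf ε s ≤ bernoulliMgf ε s - 1 :=
        log_le_sub_one_of_pos (bernoulliMgf_pos hε0 hε1 s)
    _ = ε * (exp s - 1) := by unfold bernoulliMgf; ring

lemma mul_le_bernoulliCgf (hε0 : 0 ≤ ε) (hε1 : ε ≤ 1) (s : ℝ) : ε * s ≤ bernoulliCgf ε s := by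
  have hJensen := strictConcaveOn_log_Ioi.concaveOn.2 (exp_pos s) (one_pos : (0 : ℝ) < 1) hε0
    (sub_nonneg.2 hε1) (add_sub_cancel ε 1)
  simpa [bernoulliCgf, bernoulliMgf] using hJensen

end BernoulliCgf

section CgfGap

/-- The function `t ↦ c K(a t) - K(-b t)`, where `K` is the Bernoulli(`ε`) cumulant generating
function: up to normalization, the logarithm in `Xi` as a function of `t = log (1 / β)`. -/
noncomputable def bernoulliCgfGap (c a b ε t : ℝ) : ℝ :=
  c * bernoulliCgf ε (a * t) - bernoulliCgf ε (-b * t)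

variable {c a b ε : ℝ}

lemma hasDerivAt_bernoulliCgfGap (hε0 : 0 ≤ ε) (hε1 : ε ≤ 1) (t : ℝ) :
    HasDerivAt (bernoulliCgfGap c a b ε)
      (c * (a * bernoulliTiltedMean ε (a * t)) - -b * bernoulliTiltedMean ε (-b * t)) t := by
  have hscaled (k : ℝ) : HasDerivAt (fun t => bernoulliCgf ε (k * t))
      (k * bernoulliTiltedMean ε (k * t)) t :=
    hasDerivAt_comp_const_mul (hasDerivAt_bernoulliCgf hε0 hε1 (k * t))
  exact ((hscaled a).const_mul c).sub (hscaled (-b))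

lemma hasDerivAt_deriv_bernoulliCgfGap (hε0 : 0 ≤ ε) (hε1 : ε ≤ 1) (t : ℝ) :
    HasDerivAt
      (fun t => c * (a * bernoulliTiltedMean ε (a * t)) - -b * bernoulliTiltedMean ε (-b * t))
      (c * a ^ 2 * bernoulliTiltedVar ε (a * t) - b ^ 2 * bernoulliTiltedVar ε (-b * t)) t := by
  have hscaled (k : ℝ) : HasDerivAt (fun t => k * bernoulliTiltedMean ε (k * t))
      (k * (k * bernoulliTiltedVar ε (k * t))) t :=
    (hasDerivAt_comp_const_mul (hasDerivAt_bernoulliTiltedMean hε0 hε1 (k * t))).const_mul k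
  exact (((hscaled a).const_mul c).sub (hscaled (-b))).congr_deriv (by ring)

lemma convexOn_bernoulliCgfGap (hε0 : 0 ≤ ε) (hε1 : ε ≤ 1) (hab : 0 ≤ a + b) {T : ℝ}
    (hT : b ^ 2 * exp ((a + b) * T) ≤ c * a ^ 2) :
    ConvexOn ℝ (Icc 0 T) (bernoulliCgfGap c a b ε) := by
  refine convexOn_of_hasDerivWithinAt2_nonneg (convex_Icc 0 T)
    (fun t _ => (hasDerivAt_bernoulliCgfGap hε0 hε1 t).continuousAt.continuousWithinAt)
    (fun t _ => (hasDerivAt_bernoulliCgfGap hε0 hε1 t).hasDerivWithinAt)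
    (fun t _ => (hasDerivAt_deriv_bernoulliCgfGap hε0 hε1 t).hasDerivWithinAt) ?_
  intro t ht
  obtain ⟨ht0, htT⟩ := interior_subset ht
  have hle : -b * t ≤ a * t := by gcongr; linarith
  have hvar := bernoulliTiltedVar_nonneg hε0 hε1 (a * t)
  rw [sub_nonneg]
  calc b ^ 2 * bernoulliTiltedVar ε (-b * t)
      ≤ b ^ 2 * (exp (a * t - -b * t) * bernoulliTiltedVar ε (a * t)) := by
        gcongr
        exact bernoulliTiltedVar_le_exp_mul hε0 hε1 hle
    _ = b ^ 2 * exp ((a + b) * t) * bernoulliTiltedVar ε (a * t) := by ring_nf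
    _ ≤ b ^ 2 * exp ((a + b) * T) * bernoulliTiltedVar ε (a * t) := by gcongr
    _ ≤ c * a ^ 2 * bernoulliTiltedVar ε (a * t) := by gcongr

lemma bernoulliCgfGap_le (hε0 : 0 ≤ ε) (hε1 : ε ≤ 1) (hc : 0 ≤ c) {t : ℝ} (hat0 : 0 ≤ a * t)
    (hat1 : a * t ≤ 1) :
    bernoulliCgfGap c a b ε t ≤ ε * (2 * c * a + b) * t := by
  have hexp : exp (a * t) - 1 ≤ 2 * (a * t) := by
    have := abs_exp_sub_one_le ((abs_of_nonneg hat0).trans_le hat1)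
    rw [abs_of_nonneg hat0] at this
    exact (le_abs_self _).trans this
  calc c * bernoulliCgf ε (a * t) - bernoulliCgf ε (-b * t)
      ≤ c * (ε * (2 * (a * t))) - ε * (-b * t) := by
        gcongr
        · exact (bernoulliCgf_le hε0 hε1 _).trans (by gcongr)
        · exact mul_le_bernoulliCgf hε0 hε1 _
    _ = ε * (2 * c * a + b) * t := by ring

end CgfGap

section Xi

variable {q d : ℕ} {ε β : ℝ}

lemma Xi_eq_bernoulliCgfGap_div_log (hε0 : 0 ≤ ε) (hε1 : ε ≤ 1) (hβ : 0 < β) :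
    Xi d q ε β = ((q : ℝ) - 1) *
      (bernoulliCgfGap (1 / d) (d / (10 * q)) (1 / (10 * q * (q - 1))) ε (log (1 / β)) /
        log (1 / β)) := by
  have hmgf (k : ℝ) : ε * β ^ k + (1 - ε) = bernoulliMgf ε (-k * log (1 / β)) := by
    rw [bernoulliMgf, rpow_def_of_pos hβ, one_div, log_inv, neg_mul_neg, mul_comm k]
  have hpos := bernoulliMgf_pos hε0 hε1
  rw [Xi, hmgf, hmgf, log_div (rpow_pos_of_pos (hpos _) _).ne' (hpos _).ne', log_rpow (hpos _),
    neg_div, neg_neg]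
  unfold bernoulliCgfGap bernoulliCgf
  ring

lemma antitoneOn_Xi_of_exp_le (hq : 2 ≤ q) (hd : 0 < d) (hε0 : 0 ≤ ε) (hε1 : ε ≤ 1) (hβ : 0 < β)
    (hexp : exp (((d : ℝ) / (10 * q) + 1 / (10 * q * (q - 1))) * log (1 / β)) ≤ d * (q - 1) ^ 2) :
    AntitoneOn (Xi d q ε) (Ico β 1) := by
  have : (0 : ℝ) < d := by exact_mod_cast hd
  have hq1 : (0 : ℝ) < q - 1 := sub_pos.2 (by exact_mod_cast hq)
  have : (0 : ℝ) < q := by linarith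
  have hratio : (1 / (10 * q * ((q : ℝ) - 1))) ^ 2 * (d * (q - 1) ^ 2) =
      1 / d * ((d : ℝ) / (10 * q)) ^ 2 := by
    field_simp
  have hconvex : ConvexOn ℝ (Icc 0 (log (1 / β)))
      (bernoulliCgfGap (1 / d) (d / (10 * q)) (1 / (10 * q * (q - 1))) ε) :=
    convexOn_bernoulliCgfGap hε0 hε1 (by positivity) ((by gcongr : _ ≤ _).trans_eq hratio)
  intro x hx y hy hxy
  have hx0 : 0 < x := hβ.trans_le hx.1
  have hy0 : 0 < y := hβ.trans_le hy.1
  have hlogy : 0 < log (1 / y) := log_pos ((one_lt_div hy0).2 hy.2)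
  have hlogyx : log (1 / y) ≤ log (1 / x) := by gcongr
  have hlogx : log (1 / x) ≤ log (1 / β) := by gcongr; exact hx.1
  rw [Xi_eq_bernoulliCgfGap_div_log hε0 hε1 hx0, Xi_eq_bernoulliCgfGap_div_log hε0 hε1 hy0]
  refine mul_le_mul_of_nonneg_left ?_ hq1.le
  exact monotoneOn_div_self_of_convexOn hconvex
    ⟨le_rfl, hlogy.le.trans (hlogyx.trans hlogx)⟩ (by simp [bernoulliCgfGap])
    ⟨⟨hlogy.le, hlogyx.trans hlogx⟩, hlogy.ne'⟩
    ⟨⟨(hlogy.trans_le hlogyx).le, hlogx⟩, (hlogy.trans_le hlogyx).ne'⟩ hlogyx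

lemma Xi_le_div_five (hq : 2 ≤ q) (hd : 0 < d) (hε0 : 0 ≤ ε) (hε1 : ε ≤ 1) (hβ0 : 0 < β)
    (hβ1 : β < 1) (hlog : (d : ℝ) / (10 * q) * log (1 / β) ≤ 1) : Xi d q ε β ≤ ε / 5 := by
  have : (0 : ℝ) < d := by exact_mod_cast hd
  have hq1 : (0 : ℝ) < q - 1 := sub_pos.2 (by exact_mod_cast hq)
  have : (0 : ℝ) < q := by linarith
  have hT : 0 < log (1 / β) := log_pos ((one_lt_div hβ0).2 hβ1)
  rw [Xi_eq_bernoulliCgfGap_div_log hε0 hε1 hβ0]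
  calc ((q : ℝ) - 1) *
        (bernoulliCgfGap (1 / d) (d / (10 * q)) (1 / (10 * q * (q - 1))) ε (log (1 / β)) /
          log (1 / β))
      ≤ (q - 1) * (ε * (2 * (1 / d) * (d / (10 * q)) + 1 / (10 * q * (q - 1)))) := by
        gcongr
        rw [div_le_iff₀ hT]
        exact bernoulliCgfGap_le hε0 hε1 (by positivity) (by positivity) hlog
    _ = ε / 5 - ε / (10 * q) := by field_simp; ring
    _ ≤ ε / 5 := sub_le_self _ (by positivity)

end Xi

section Endpoint

variable {q d : ℝ}

lemma one_sub_div_add_one_pos (hd : 0 ≤ d) (hqd : q ≤ d) : 0 < 1 - q / (d + 1) := by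
  rw [sub_pos, div_lt_one (by positivity)]
  linarith

lemma div_mul_log_le_log_add_one (hq : 0 < q) (hqd : q ≤ d) :
    d / q * log (1 / (1 - q / (d + 1))) ≤ log (d + 1) := by
  have hd : 0 < d := hq.trans_le hqd
  have hpos := one_sub_div_add_one_pos hd.le hqd
  have hBernoulli : (d + 1)⁻¹ ≤ (1 - q / (d + 1)) ^ (d / q) :=
    calc (d + 1)⁻¹ = 1 + d / q * -(q / (d + 1)) := by field_simp; ring
      _ ≤ (1 + -(q / (d + 1))) ^ (d / q) :=
        one_add_mul_self_le_rpow_one_add (by linarith) ((one_le_div hq).2 hqd)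
      _ = (1 - q / (d + 1)) ^ (d / q) := by rw [← sub_eq_add_neg]
  have hlog := log_le_log (by positivity) hBernoulli
  rw [log_inv, log_rpow hpos] at hlog
  rw [one_div, log_inv]
  linarith

lemma div_mul_log_le_div_sub (hq : 0 < q) (hqd : q ≤ d) :
    d / q * log (1 / (1 - q / (d + 1))) ≤ d / (d + 1 - q) := by
  have hd : 0 < d := hq.trans_le hqd
  have hsub : 0 < d + 1 - q := by linarith
  calc d / q * log (1 / (1 - q / (d + 1)))
      ≤ d / q * (1 / (1 - q / (d + 1)) - 1) := by
        gcongr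
        exact log_le_sub_one_of_pos (one_div_pos.2 (one_sub_div_add_one_pos hd.le hqd))
    _ = d / (d + 1 - q) := by
        rw [one_sub_div (by positivity)]
        field_simp
        ring

lemma exp_mul_log_endpoint_le (hq : 2 ≤ q) (hqd : q ≤ d) :
    exp ((d / (10 * q) + 1 / (10 * q * (q - 1))) * log (1 / (1 - q / (d + 1)))) ≤
      d * (q - 1) ^ 2 := by
  have hd : 2 ≤ d := hq.trans hqd
  have hpos := one_sub_div_add_one_pos (by positivity) hqd
  have hT : 0 ≤ log (1 / (1 - q / (d + 1))) := by
    refine log_nonneg ((one_le_div hpos).2 ?_)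
    rw [sub_le_self_iff]
    positivity
  -- The rates even add up to at most `d / (5 q)`; the factor `1 / 2` leads to a square root below.
  have hrates : d / (10 * q) + 1 / (10 * q * (q - 1)) ≤ 1 / 2 * (d / q) := by
    have hinv : 1 / (q - 1) ≤ d := by
      rw [div_le_iff₀ (by linarith)]
      nlinarith
    calc d / (10 * q) + 1 / (10 * q * (q - 1)) = (d + 1 / (q - 1)) / (10 * q) := by
          rw [add_div, div_div, mul_comm (q - 1)]
      _ ≤ (d + 4 * d) / (10 * q) := by gcongr; linarith
      _ = 1 / 2 * (d / q) := by ring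
  calc exp ((d / (10 * q) + 1 / (10 * q * (q - 1))) * log (1 / (1 - q / (d + 1))))
      ≤ exp (1 / 2 * (d / q) * log (1 / (1 - q / (d + 1)))) := by gcongr
    _ ≤ exp (log (d + 1) / 2) := by
        gcongr
        linarith [div_mul_log_le_log_add_one (by linarith) hqd]
    _ = √(d + 1) := by rw [← log_sqrt (by positivity), exp_log (by positivity)]
    _ ≤ d := sqrt_le_iff.2 ⟨by positivity, by nlinarith⟩
    _ ≤ d * (q - 1) ^ 2 := le_mul_of_one_le_right (by positivity) (by nlinarith)

end Endpoint

theorem stmt14_general (q d : ℕ) (hq : 2 ≤ q) (hqd : q ≤ d) (ε : ℝ) (hε0 : 0 ≤ ε) (hε1 : ε ≤ 1) :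
    AntitoneOn (Xi d q ε) (Ico (1 - (q : ℝ) / ((d : ℝ) + 1)) 1) ∧
    (2 * q ≤ d → Xi d q ε (1 - (q : ℝ) / ((d : ℝ) + 1)) ≤ ε / 5) := by
  have hd : 0 < d := by lia
  have hq0 : (0 : ℝ) < q := by exact_mod_cast (by lia : 0 < q)
  have hqd' : (q : ℝ) ≤ d := by exact_mod_cast hqd
  have hβ0 := one_sub_div_add_one_pos d.cast_nonneg hqd'
  refine ⟨antitoneOn_Xi_of_exp_le hq hd hε0 hε1 hβ0
    (exp_mul_log_endpoint_le (by exact_mod_cast hq) hqd'), fun h2q => ?_⟩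
  refine Xi_le_div_five hq hd hε0 hε1 hβ0 (sub_lt_self 1 (by positivity)) ?_
  have h2q' : 2 * (q : ℝ) ≤ d := by exact_mod_cast h2q
  calc (d : ℝ) / (10 * q) * log (1 / (1 - q / (d + 1)))
      = d / q * log (1 / (1 - q / (d + 1))) / 10 := by ring
    _ ≤ d / (d + 1 - q) / 10 := by gcongr ?_ / 10; exact div_mul_log_le_div_sub hq0 hqd'
    _ ≤ 1 := by
        rw [div_div, div_le_one (by linarith)]
        linarith

/-- Numerical claim. For `q ≥ 2`, `d ≥ 2q` and `0 < ε ≤ 1/4`,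
the function `Ξ_{d,q,ε}` is antitone on `[1 - q/(d+1), 1)` and
`Ξ_{d,q,ε}(1 - q/(d+1)) ≤ ε`. -/
theorem stmt14 (q d : ℕ) (hq : 2 ≤ q) (hd : 2 * q ≤ d) (ε : ℝ)
    (hε0 : 0 < ε) (hε : ε ≤ 1/4) :
    AntitoneOn (Xi d q ε) (Set.Ico (1 - (q:ℝ) / ((d:ℝ) + 1)) 1) ∧
    Xi d q ε (1 - (q:ℝ) / ((d:ℝ) + 1)) ≤ ε := by
  obtain ⟨hanti, hbound⟩ := stmt14_general q d hq (by lia) ε hε0.le (by linarith)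
  exact ⟨hanti, (hbound hd).trans (by linarith)⟩
end
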